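/- Let X ⊆ ℝ^d be a connected smooth submanifold and let K ⊆ X be compact. Then there exists a constant C > 0 such that for all p, q ∈ K: |p − q| ≤ d_h(p, q) ≤ C·|p − q|, where |p − q| is the Euclidean distance and d_h is the intrinsic (path-length) distance on X. -/

import Mathlib

/-!
The lower bound is the fundamental theorem of calculus: a path from `p` to `q` has
`|p - q| = |∫ γ'| ≤ ∫ |γ'|`.

For the upper bound, lengths are controlled through Lipschitz constants, using the relation
`LipJoined X p q L`: there is an `L`-Lipschitz `C¹` path in `X` from `p` to `q` that is constant
outside `[0, 1]`. Such paths concatenate (`LipJoined.trans`), at the cost of a factor `2` in the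
constants, which is harmless here, and they give `d_h(p, q) ≤ L` (`LipJoined.pathDist_le`).

* Locally, a parametrization `ψ` is bi-Lipschitz, because its derivative is injective; images of
  segments then join nearby points `x, y` with constant `C |x - y|` (`exists_local_lipJoined`).
* Being joined with some finite constant is thus an equivalence relation that is locally total, so
  any two points of the connected set `X` are joined (`exists_lipJoined`).
* Around a pair `p ≠ q`, all pairs are joined with a bounded constant through `p` and `q`, while
  their distance is bounded below. Together with the local statement on the diagonal, every
  pair in `X × X` has a neighbourhood where `d_h ≤ C |x - y|` (`exists_nhds_lipJoined`), and
  finitely many such neighbourhoods cover the compact set `K × K`.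
-/


open Filter Asymptotics
open scoped Topology ENNReal

noncomputable section

/-- Euclidean space ℝ^d. -/
abbrev Eucl (n : ℕ) : Type := EuclideanSpace ℝ (Fin n)

/-- `X ⊆ ℝ^d` is a smooth `m`-dimensional submanifold: every `p ∈ X` has an open
neighbourhood `U` in `ℝ^d` such that `X ∩ U` is the image of a smooth map `ψ` on an open
`V ⊆ ℝ^m` with everywhere injective derivative which is a homeomorphism from `V`
onto `X ∩ U`. -/
def IsSmoothSubmanifold (d m : ℕ) (X : Set (Eucl d)) : Prop :=
  ∀ p ∈ X, ∃ U : Set (Eucl d), IsOpen U ∧ p ∈ U ∧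
    ∃ (V : Set (Eucl m)) (ψ : Eucl m → Eucl d),
      IsOpen V ∧ ContDiffOn ℝ (⊤ : ℕ∞) ψ V ∧
      (∀ v ∈ V, Function.Injective (fderivWithin ℝ ψ V v)) ∧
      Set.BijOn ψ V (X ∩ U) ∧
      ∃ χ : Eucl d → Eucl m, ContinuousOn χ (X ∩ U) ∧ ∀ v ∈ V, χ (ψ v) = v

/-- The intrinsic (path-length) distance on `X`: the infimum of lengths of `C¹` paths in `X`
from `p` to `q` (`∞` if there is no such path). -/
def pathDist {d : ℕ} (X : Set (Eucl d)) (p q : Eucl d) : ℝ≥0∞ :=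
  ⨅ γ : {γ : ℝ → Eucl d // ContDiffOn ℝ 1 γ (Set.Icc 0 1) ∧
      (∀ t ∈ Set.Icc (0:ℝ) 1, γ t ∈ X) ∧ γ 0 = p ∧ γ 1 = q},
    ENNReal.ofReal (∫ t in (0:ℝ)..1, ‖derivWithin γ.val (Set.Icc 0 1) t‖)

open scoped NNReal

/-- `p` and `q` are joined in `X` by a globally defined `C¹` path that is `L`-Lipschitz and is
constant outside `[0, 1]`. Being constant there makes such paths concatenate to `C¹` paths, and
the Lipschitz constant bounds the length of the part over `[0, 1]`. -/
def LipJoined {d : ℕ} (X : Set (Eucl d)) (p q : Eucl d) (L : ℝ≥0) : Prop :=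
  ∃ γ : ℝ → Eucl d, ContDiff ℝ 1 γ ∧ (∀ t, γ t ∈ X) ∧ (∀ t ≤ 0, γ t = p) ∧
    (∀ t, 1 ≤ t → γ t = q) ∧ LipschitzWith L γ

namespace LipJoined

variable {d : ℕ} {X : Set (Eucl d)} {p q r : Eucl d} {L M : ℝ≥0}

lemma mono (h : LipJoined X p q L) (hLM : L ≤ M) : LipJoined X p q M := by
  obtain ⟨γ, h1, h2, h3, h4, h5⟩ := h
  exact ⟨γ, h1, h2, h3, h4, h5.weaken hLM⟩

lemma symm (h : LipJoined X p q L) : LipJoined X q p L := by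
  obtain ⟨γ, h1, h2, h3, h4, h5⟩ := h
  refine ⟨fun t => γ (1 - t), by fun_prop, fun t => h2 _, fun t ht => h4 _ (by linarith),
    fun t ht => h3 _ (by linarith), ?_⟩
  refine LipschitzWith.of_dist_le_mul fun s t => ?_
  refine (h5.dist_le_mul _ _).trans_eq ?_
  rw [dist_sub_left]

/-- Both halves of the concatenation are constant equal to `q` past the junction, so it can be
written as the sum `γ₁ (2t) + γ₂ (2t - 1) - q`, which is visibly `C¹` and Lipschitz. -/
lemma trans (h : LipJoined X p q L) (h' : LipJoined X q r M) :
    LipJoined X p r (2 * (L + M)) := by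
  obtain ⟨γ, h1, h2, h3, h4, h5⟩ := h
  obtain ⟨δ, k1, k2, k3, k4, k5⟩ := h'
  refine ⟨fun t => γ (2 * t) + δ (2 * t - 1) - q, by fun_prop, fun t => ?_, fun t ht => ?_,
    fun t ht => ?_, ?_⟩
  · rcases le_total t (1 / 2) with ht | ht
    · simpa [k3 (2 * t - 1) (by linarith)] using h2 _
    · simpa [h4 (2 * t) (by linarith)] using k2 _
  · simp [k3 (2 * t - 1) (by linarith), h3 (2 * t) (by linarith)]
  · simp [h4 (2 * t) (by linarith), k4 (2 * t - 1) (by linarith)]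
  · refine LipschitzWith.of_dist_le_mul fun s t => ?_
    have e1 := h5.dist_le_mul (2 * s) (2 * t)
    have e2 := k5.dist_le_mul (2 * s - 1) (2 * t - 1)
    rw [Real.dist_eq, show 2 * s - 2 * t = 2 * (s - t) by ring, abs_mul, abs_two] at e1
    rw [Real.dist_eq, show 2 * s - 1 - (2 * t - 1) = 2 * (s - t) by ring, abs_mul, abs_two] at e2
    rw [dist_sub_right]
    refine (dist_add_add_le _ _ _ _).trans ((add_le_add e1 e2).trans_eq ?_)
    rw [Real.dist_eq]
    push_cast
    ring

lemma pathDist_le (h : LipJoined X p q L) : pathDist X p q ≤ L := by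
  obtain ⟨γ, h1, h2, h3, h4, h5⟩ := h
  refine (iInf_le _ ⟨γ, h1.contDiffOn, fun t _ => h2 t, h3 0 le_rfl, h4 1 le_rfl⟩).trans ?_
  refine ENNReal.ofReal_le_of_le_toReal ?_
  have hb : ∀ t ∈ Set.uIoc (0 : ℝ) 1, ‖‖derivWithin γ (Set.Icc 0 1) t‖‖ ≤ L := by
    intro t ht
    rw [Set.uIoc_of_le zero_le_one] at ht
    rw [norm_norm, (h1.differentiable one_ne_zero t).derivWithin
      (uniqueDiffOn_Icc zero_lt_one t ⟨ht.1.le, ht.2⟩)]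
    exact norm_deriv_le_of_lipschitz h5
  have := intervalIntegral.norm_integral_le_of_norm_le_const hb
  simpa using (le_abs_self _).trans this

end LipJoined

lemma exists_lipschitzWith_smoothTransition :
    ∃ A : ℝ≥0, LipschitzWith A Real.smoothTransition := by
  have hc : ContDiff ℝ 1 Real.smoothTransition := Real.smoothTransition.contDiff (n := 1)
  obtain ⟨A, hA⟩ := hc.locallyLipschitz.locallyLipschitzOn.exists_lipschitzOnWith_of_compact
    (isCompact_Icc (a := (0 : ℝ)) (b := 1))
  refine ⟨A, LipschitzWith.of_dist_le_mul fun s t => ?_⟩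
  rw [← Real.smoothTransition.projIcc (x := s), ← Real.smoothTransition.projIcc (x := t)]
  refine (hA.dist_le_mul _ (Subtype.mem _) _ (Subtype.mem _)).trans ?_
  gcongr
  simpa [Subtype.dist_eq] using (LipschitzWith.projIcc (zero_le_one' ℝ)).dist_le_mul s t

/-- A strictly differentiable map with injective derivative at a point is expanding, up to a
constant, near that point. -/
lemma exists_antilipschitz_of_injective {m d : ℕ} {ψ : Eucl m → Eucl d}
    {A : Eucl m →L[ℝ] Eucl d} {v : Eucl m} (h : HasStrictFDerivAt ψ A v)
    (hA : Function.Injective A) :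
    ∃ c : ℝ≥0, ∃ s ∈ 𝓝 v, ∀ x ∈ s, ∀ y ∈ s, dist x y ≤ c * dist (ψ x) (ψ y) := by
  obtain ⟨κ, hκ, hanti⟩ := (A : Eucl m →ₗ[ℝ] Eucl d).exists_antilipschitzWith
    (LinearMap.ker_eq_bot.2 hA)
  have hκ' : (0 : ℝ) < κ := hκ
  -- An error of half the expansion constant `κ⁻¹` of `A` can be absorbed.
  obtain ⟨s, hs, happ⟩ := h.approximates_deriv_on_nhds (c := (2 * κ)⁻¹) (Or.inr (by positivity))
  refine ⟨2 * κ, s, hs, fun x hx y hy => ?_⟩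
  have h1 := happ x hx y hy
  have h2 : ‖x - y‖ ≤ κ * ‖A (x - y)‖ := by
    simpa [dist_eq_norm, map_sub] using hanti.le_mul_dist x y
  have h3 : ‖A (x - y)‖ ≤ ‖ψ x - ψ y‖ + ‖ψ x - ψ y - A (x - y)‖ := norm_le_norm_add_norm_sub _ _
  have h4 : ‖x - y‖ ≤ κ * ‖ψ x - ψ y‖ + κ * (((2 * κ)⁻¹ : ℝ≥0) * ‖x - y‖) := by
    rw [← mul_add]
    refine h2.trans (mul_le_mul_of_nonneg_left (h3.trans ?_) hκ'.le)
    gcongr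
  have h5 : (κ : ℝ) * (((2 * κ)⁻¹ : ℝ≥0) * ‖x - y‖) = ‖x - y‖ / 2 := by
    push_cast
    field_simp
  rw [dist_eq_norm, dist_eq_norm]
  push_cast
  linarith

/-- Near each of its points, a submanifold is joined by Lipschitz paths with constant comparable
to the Euclidean distance: these paths are images of segments under a parametrization, traversed
with a smooth step function so as to be constant outside `[0, 1]`. -/
lemma exists_local_lipJoined {d m : ℕ} {X : Set (Eucl d)} (hX : IsSmoothSubmanifold d m X)
    {p : Eucl d} (hp : p ∈ X) :
    ∃ C : ℝ≥0, ∃ W ∈ 𝓝 p, ∀ x ∈ X ∩ W, ∀ y ∈ X ∩ W, LipJoined X x y (C * nndist x y) := by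
  obtain ⟨U, hU, hpU, V, ψ, hV, hψ, hinj, hbij, χ, hχ, hχψ⟩ := hX p hp
  obtain ⟨v, hv, rfl⟩ := hbij.surjOn ⟨hp, hpU⟩
  have hVv : V ∈ 𝓝 v := hV.mem_nhds hv
  have hcd : ContDiffAt ℝ (⊤ : ℕ∞) ψ v := hψ.contDiffAt hVv
  have hstrict : HasStrictFDerivAt ψ (fderiv ℝ ψ v) v := hcd.hasStrictFDerivAt (by simp)
  have hi : Function.Injective (fderiv ℝ ψ v) := by
    rw [← fderivWithin_of_isOpen hV hv]; exact hinj v hv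
  obtain ⟨c, s, hs, hc⟩ := exists_antilipschitz_of_injective hstrict hi
  obtain ⟨M, t, ht, hM⟩ := hstrict.exists_lipschitzOnWith
  obtain ⟨A, hA⟩ := exists_lipschitzWith_smoothTransition
  obtain ⟨ε, hε, hball⟩ := Metric.mem_nhds_iff.1 (inter_mem (inter_mem hs ht) hVv)
  have hW : χ ⁻¹' Metric.ball v ε ∈ 𝓝[X ∩ U] (ψ v) := by
    apply hχ (ψ v) ⟨hp, hpU⟩
    rw [hχψ v hv]
    exact Metric.ball_mem_nhds v hε
  obtain ⟨W, hW, hWsub⟩ := mem_nhdsWithin_iff_exists_mem_nhds_inter.1 hW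
  refine ⟨M * A * c, W ∩ U, inter_mem hW (hU.mem_nhds hpU), ?_⟩
  rintro x ⟨hxX, hxW, hxU⟩ y ⟨hyX, hyW, hyU⟩
  have hx' := hWsub ⟨hxW, hxX, hxU⟩
  have hy' := hWsub ⟨hyW, hyX, hyU⟩
  obtain ⟨a, ha, rfl⟩ := hbij.surjOn ⟨hxX, hxU⟩
  obtain ⟨b, hb, rfl⟩ := hbij.surjOn ⟨hyX, hyU⟩
  rw [Set.mem_preimage, hχψ _ ha] at hx'
  rw [Set.mem_preimage, hχψ _ hb] at hy'
  set ℓ : ℝ → Eucl m := fun τ => a + Real.smoothTransition τ • (b - a) with hℓ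
  have hmem : ∀ τ, ℓ τ ∈ Metric.ball v ε := fun τ =>
    (convex_ball v ε).add_smul_sub_mem hx' hy'
      ⟨Real.smoothTransition.nonneg τ, Real.smoothTransition.le_one τ⟩
  have hℓc : ContDiff ℝ 1 ℓ :=
    contDiff_const.add ((Real.smoothTransition.contDiff (n := 1)).smul contDiff_const)
  have hℓL : LipschitzWith (A * nndist a b) ℓ := by
    refine LipschitzWith.of_dist_le_mul fun σ τ => ?_
    rw [dist_add_left, dist_eq_norm, ← sub_smul, norm_smul, ← dist_eq_norm, ← dist_eq_norm,
      dist_comm b a]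
    have := hA.dist_le_mul σ τ
    calc _ ≤ (A * dist σ τ) * dist a b := by gcongr
      _ = _ := by push_cast; ring
  refine ⟨ψ ∘ ℓ, (hψ.of_le (by exact_mod_cast le_top)).comp_contDiff hℓc
    fun τ => (hball (hmem τ)).2, fun τ => (hbij.mapsTo (hball (hmem τ)).2).1,
    fun τ hτ => ?_, fun τ hτ => ?_, ?_⟩
  · simp [hℓ, Real.smoothTransition.zero_of_nonpos hτ]
  · simp [hℓ, Real.smoothTransition.one_of_one_le hτ]
  · refine LipschitzWith.of_dist_le_mul fun σ τ => ?_
    have e1 := hM.dist_le_mul _ (hball (hmem σ)).1.2 _ (hball (hmem τ)).1.2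
    have e2 := hℓL.dist_le_mul σ τ
    have e3 := hc a (hball hx').1.1 b (hball hy').1.1
    calc dist (ψ (ℓ σ)) (ψ (ℓ τ)) ≤ M * dist (ℓ σ) (ℓ τ) := e1
      _ ≤ M * (A * (c * dist (ψ a) (ψ b)) * dist σ τ) := by
        gcongr
        refine e2.trans ?_
        push_cast
        gcongr
      _ = _ := by push_cast; ring

lemma exists_lipJoined {d m : ℕ} {X : Set (Eucl d)} (hX : IsSmoothSubmanifold d m X)
    (hconn : IsConnected X) {p q : Eucl d} (hp : p ∈ X) (hq : q ∈ X) :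
    ∃ L, LipJoined X p q L := by
  refine hconn.isPreconnected.induction₂ (fun x y => ∃ L, LipJoined X x y L) (fun x hx => ?_)
    (fun x y z _ _ _ => ?_) (fun x y _ _ => ?_) hp hq
  · obtain ⟨C, W, hW, h⟩ := exists_local_lipJoined hX hx
    filter_upwards [self_mem_nhdsWithin, mem_nhdsWithin_of_mem_nhds hW] with y hyX hyW
    exact ⟨_, h x ⟨hx, mem_of_mem_nhds hW⟩ y ⟨hyX, hyW⟩⟩
  · rintro ⟨L, h⟩ ⟨M, h'⟩
    exact ⟨_, h.trans h'⟩
  · rintro ⟨L, h⟩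
    exact ⟨L, h.symm⟩

/-- The comparison holds with a uniform constant near every pair of points. Off the diagonal it
suffices that nearby pairs are joined with a bounded constant, as their Euclidean distance is
bounded below. -/
lemma exists_nhds_lipJoined {d m : ℕ} {X : Set (Eucl d)} (hX : IsSmoothSubmanifold d m X)
    (hconn : IsConnected X) {p q : Eucl d} (hp : p ∈ X) (hq : q ∈ X) :
    ∃ C : ℝ≥0, ∃ N ∈ 𝓝 (p, q), ∀ z ∈ N, z.1 ∈ X → z.2 ∈ X →
      LipJoined X z.1 z.2 (C * nndist z.1 z.2) := by
  obtain ⟨C₁, W₁, hW₁, h₁⟩ := exists_local_lipJoined hX hp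
  by_cases hpq : p = q
  · subst hpq
    exact ⟨C₁, W₁ ×ˢ W₁, prod_mem_nhds hW₁ hW₁,
      fun z hz hz1 hz2 => h₁ _ ⟨hz1, hz.1⟩ _ ⟨hz2, hz.2⟩⟩
  obtain ⟨C₂, W₂, hW₂, h₂⟩ := exists_local_lipJoined hX hq
  obtain ⟨L, hL⟩ := exists_lipJoined hX hconn hp hq
  obtain ⟨δ, hδ⟩ : ∃ δ : ℝ≥0, nndist p q = 3 * δ := ⟨nndist p q / 3, by field_simp⟩
  have hδ0 : 0 < δ := by
    rw [pos_iff_ne_zero]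
    rintro rfl
    exact hpq (by simpa using hδ)
  have hδr : dist p q = 3 * (δ : ℝ) := by rw [← coe_nndist, hδ]; simp
  refine ⟨2 * (2 * (C₁ * δ + L) + C₂ * δ) / δ, (W₁ ∩ Metric.ball p δ) ×ˢ (W₂ ∩ Metric.ball q δ),
    prod_mem_nhds (inter_mem hW₁ (Metric.ball_mem_nhds _ (by exact_mod_cast hδ0)))
      (inter_mem hW₂ (Metric.ball_mem_nhds _ (by exact_mod_cast hδ0))), ?_⟩
  rintro ⟨x, y⟩ ⟨⟨hxW, hxδ⟩, hyW, hyδ⟩ hx hy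
  dsimp only at *
  rw [Metric.mem_ball] at hxδ hyδ
  have j₁ := (h₁ x ⟨hx, hxW⟩ p ⟨hp, mem_of_mem_nhds hW₁⟩).mono
    (M := C₁ * δ) (by gcongr; exact hxδ.le)
  have j₂ := (h₂ q ⟨hq, mem_of_mem_nhds hW₂⟩ y ⟨hy, hyW⟩).mono
    (M := C₂ * δ) (by gcongr; rw [nndist_comm]; exact hyδ.le)
  refine ((j₁.trans hL).trans j₂).mono ?_
  have hd : δ ≤ nndist x y := by
    have := dist_triangle4 p x y q
    rw [dist_comm p x] at this
    have h : (δ : ℝ) ≤ dist x y := by linarith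
    exact h
  calc _ = 2 * (2 * (C₁ * δ + L) + C₂ * δ) / δ * δ := by field_simp
    _ ≤ _ := by gcongr

lemma ofReal_dist_le_pathDist {d : ℕ} (X : Set (Eucl d)) (p q : Eucl d) :
    ENNReal.ofReal (dist p q) ≤ pathDist X p q := by
  refine le_iInf ?_
  rintro ⟨γ, hγ, -, rfl, rfl⟩
  apply ENNReal.ofReal_le_ofReal
  rw [dist_comm, dist_eq_norm,
    ← intervalIntegral.integral_derivWithin_Icc_of_contDiffOn_Icc hγ zero_le_one]
  exact intervalIntegral.norm_integral_le_integral_norm zero_le_one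

/-- **Statement 17.** On a compact subset `K` of a connected smooth submanifold `X ⊆ ℝ^d`,
the intrinsic distance is comparable to the Euclidean distance:
`|p − q| ≤ d_h(p,q) ≤ C·|p − q|` for some `C > 0` and all `p, q ∈ K`. -/
theorem intrinsic_dist_comparable
    (d m : ℕ) (X : Set (Eucl d)) (hX : IsSmoothSubmanifold d m X) (hconn : IsConnected X)
    (K : Set (Eucl d)) (hKX : K ⊆ X) (hK : IsCompact K) :
    ∃ C : ℝ, 0 < C ∧ ∀ p ∈ K, ∀ q ∈ K,
      ENNReal.ofReal (dist p q) ≤ pathDist X p q ∧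
      pathDist X p q ≤ ENNReal.ofReal (C * dist p q) := by
  obtain ⟨C, hC⟩ : ∃ C : ℝ≥0, ∀ z ∈ K ×ˢ K, z.1 ∈ X → z.2 ∈ X →
      LipJoined X z.1 z.2 (C * nndist z.1 z.2) := by
    refine (hK.prod hK).induction_on (p := fun S => ∃ C : ℝ≥0, ∀ z ∈ S, z.1 ∈ X → z.2 ∈ X →
      LipJoined X z.1 z.2 (C * nndist z.1 z.2)) ⟨0, by simp⟩ ?_ ?_ ?_
    · rintro S T hST ⟨C, hC⟩
      exact ⟨C, fun z hz => hC z (hST hz)⟩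
    · rintro S T ⟨C, hC⟩ ⟨D, hD⟩
      refine ⟨max C D, fun z hz h1 h2 => ?_⟩
      rcases hz with hz | hz
      · exact (hC z hz h1 h2).mono (by gcongr; exact le_max_left _ _)
      · exact (hD z hz h1 h2).mono (by gcongr; exact le_max_right _ _)
    · rintro ⟨p, q⟩ ⟨hp, hq⟩
      obtain ⟨C, N, hN, h⟩ := exists_nhds_lipJoined hX hconn (hKX hp) (hKX hq)
      exact ⟨N, mem_nhdsWithin_of_mem_nhds hN, C, h⟩
  -- The constant must be positive, hence the `+ 1`.
  refine ⟨C + 1, by positivity, fun p hp q hq => ⟨ofReal_dist_le_pathDist X p q, ?_⟩⟩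
  refine (hC (p, q) ⟨hp, hq⟩ (hKX hp) (hKX hq)).pathDist_le.trans ?_
  rw [← ENNReal.ofReal_coe_nnreal]
  apply ENNReal.ofReal_le_ofReal
  push_cast
  gcongr
  linarith

end
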